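/- Let (d,v,u) be an admissible triple for (λ,μ), let S(v) = B·d ∩ A ∩ J·v and let c = udv^{−1}. Then I ∩ S(v)·d^{−1}·u^{−1} = I ∩ J·c^{−1} (as sets of roots). -/

import Mathlib

/-!
Write a root as `R x y = e_y - e_x` with signed indices, so that `R x y = R (-y) (-x)`, the root
`R x y` is positive iff `x < y`, and `(R x y)·w = R (x·w) (y·w)`, where `x·w = w⁻¹ x`.

Only the inclusion `⊇` has content.  Let `α ∈ I` and `β ∈ J` be simple roots with
`α·u·d = β·v`.  Since `u ∈ W_B` preserves the blocks `[1,b]`, `[b+1,r]` and makes `α` positive,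
`α·u = R i j` with `i < j` in one `b`-block; likewise `β·v = R p q` with `p < q` in one `a`-block.
The map `x ↦ x·d` is increasing on the `b`-blocks and its inverse is increasing on the `a`-blocks,
because `d ∈ D_{B̃,Ã}`.  It sends `{i, j}` to `{p, q}` or to `{-q, -p}`, so counting gives
`j - i = q - p`, and it is a translation on `[i,j]` (`step_eq_one`).  Hence each of the simple roots
`α_p, …, α_{q-1}` lies in `B·d ∩ A`.  By admissibility `v⁻¹` makes these positive, so `x ↦ x·v⁻¹`
is increasing on `[p,q]`; as `β` is simple, it sends `p, q` to two consecutive integers.  Therefore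
`q = p + 1`, and `β·v = α_p ∈ B·d ∩ A`.
-/

/- The hyperoctahedral group `W_r` (the Weyl group of type `B_r`), realized as the group
of permutations `w` of `{±1, …, ±r}` satisfying `(−i)w = −(iw)`.  We realize its elements
inside `Equiv.Perm ℤ`, letting `w` act on `i` on the *right* via `i·w := w⁻¹ i` (so that
`i·(wd) = (i·w)·d` and products of group elements can be written in the same order as in
the paper). -/

namespace QQS

abbrev G : Type := Equiv.Perm ℤ

/-- The generators `s₀ = (1,−1)` and `sᵢ = (i,i+1)(−i,−i−1)`. -/
def s (i : ℕ) : G :=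
  if i = 0 then Equiv.swap 1 (-1)
  else Equiv.swap (i : ℤ) ((i : ℤ) + 1) * Equiv.swap (-(i : ℤ)) (-((i : ℤ) + 1))

/-- The generating set `{s₀, s₁, …, s_{r−1}}` of `W_r`. -/
def gens (r : ℕ) : Set G := {x | ∃ i, i < r ∧ x = s i}

/-- Membership in `W_r`: permutations of `{±1, …, ±r}` commuting with negation. -/
def inW (r : ℕ) (w : G) : Prop :=
  (∀ i : ℤ, w (-i) = -(w i)) ∧ ∀ i : ℤ, (r : ℤ) < |i| → w i = i

/-- The length `ℓ(w)` of `w ∈ W_r` with respect to the generators `s₀, …, s_{r−1}`. -/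
noncomputable def len (r : ℕ) (w : G) : ℕ :=
  sInf {n | ∃ l : List G, l.length = n ∧ (∀ x ∈ l, x ∈ gens r) ∧ l.prod = w}

/-- The partial sum of the first `k` parts of a composition. -/
def psum (l : List ℕ) (k : ℕ) : ℕ := (l.take k).sum

end QQS
namespace QQS

/- The root system of type `B_r`.  `W_r` acts on the vector space `V` with basis
`e₁, …, e_r`; we realize a vector `x = ∑ xᵢ eᵢ ∈ V` as the odd function `ℤ → ℚ` with
value `xᵢ` at `i` and `−xᵢ` at `−i`.  The (right) action of `w` on `V` determined by
`eᵢ·w = e_{i·w}` if `i·w > 0` and `eᵢ·w = −e_{−(i·w)}` if `i·w < 0` then becomes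
`x·w = x ∘ w`. -/

/-- The basis vector `eᵢ`, as an odd function `ℤ → ℚ`. -/
def evec (i : ℕ) : ℤ → ℚ := fun j => if j = (i : ℤ) then 1 else if j = -(i : ℤ) then -1 else 0

/-- The simple roots: `α₀ = e₁` and `αᵢ = e_{i+1} − eᵢ` for `i ≥ 1`. -/
def sroot : ℕ → (ℤ → ℚ)
  | 0 => evec 1
  | i + 1 => evec (i + 2) - evec (i + 1)

/-- `Δ₀ = {α₀, α₁, …, α_{r−1}}`. -/
def Delta0 (r : ℕ) : Set (ℤ → ℚ) := {x | ∃ i, i < r ∧ x = sroot i}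

/-- `Δ = Δ₀ ∖ {α₀}`. -/
def DeltaS (r : ℕ) : Set (ℤ → ℚ) := Delta0 r \ {sroot 0}

/-- The right action of `w ∈ W_r` on `V`: `x·w = x ∘ w`. -/
def rAct (w : G) (x : ℤ → ℚ) : ℤ → ℚ := fun j => x (w j)

/-- `x` is a positive root: `eᵢ`, `eᵢ + eⱼ` or `eⱼ − eᵢ` with `1 ≤ i < j ≤ r`. -/
def isPos (r : ℕ) (x : ℤ → ℚ) : Prop :=
  (∃ i, 1 ≤ i ∧ i ≤ r ∧ x = evec i) ∨
  (∃ i j, 1 ≤ i ∧ i < j ∧ j ≤ r ∧ (x = evec i + evec j ∨ x = evec j - evec i))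

/-- `D_K = {d ∈ W_r : α·d is a positive root for every α ∈ K}`. -/
def DD (r : ℕ) (K : Set (ℤ → ℚ)) : Set G :=
  {d | inW r d ∧ ∀ α ∈ K, isPos r (rAct d α)}

/-- `D_{K,L} = D_K ∩ D_L⁻¹`. -/
def DDd (r : ℕ) (K L : Set (ℤ → ℚ)) : Set G := {d | d ∈ DD r K ∧ d⁻¹ ∈ DD r L}

/-- For `M ⊆ Δ₀`, the parabolic subgroup `W_M`, generated by the reflections `s_α`
for `α ∈ M` (the reflection in the hyperplane orthogonal to `αᵢ` is `sᵢ`). -/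
def Wpar (r : ℕ) (M : Set (ℤ → ℚ)) : Subgroup G :=
  Subgroup.closure {w | ∃ i, i < r ∧ sroot i ∈ M ∧ w = s i}

/-- `D^M_{K,L} = D_K ∩ D_L⁻¹ ∩ W_M`. -/
def DDm (r : ℕ) (K L M : Set (ℤ → ℚ)) : Set G := {d | d ∈ DDd r K L ∧ d ∈ Wpar r M}

end QQS
namespace QQS

/- Fix an `a`-bicomposition `λ = (l1, l2)` and a `b`-bicomposition `μ = (m1, m2)` in
`Λ(n,r)`.  The sets of simple roots `J, I ⊆ Δ`, and `Ã, B̃, A, B ⊆ Δ₀`. -/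

/-- `j` is a partial sum of the composition `l`. -/
def isPartialSum (l : List ℕ) (j : ℕ) : Prop := ∃ k, psum l k = j

/-- `{α_{off+j} : 1 ≤ j ≤ l.sum − 1, j not a partial sum of l}`. -/
def compRoots (off : ℕ) (l : List ℕ) : Set (ℤ → ℚ) :=
  {x | ∃ j, 1 ≤ j ∧ j + 1 ≤ l.sum ∧ ¬ isPartialSum l j ∧ x = sroot (off + j)}

/-- `J = J₁ ∪ J₂ ⊆ Δ` associated to the bicomposition `(l1, l2)`. -/
def Jset (l1 l2 : List ℕ) : Set (ℤ → ℚ) := compRoots 0 l1 ∪ compRoots l1.sum l2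

/-- `Ã = Δ₀ ∖ {α_a}` if `a ≠ r`, and `Ã = Δ₀` if `a = r`. -/
def Atil (r a : ℕ) : Set (ℤ → ℚ) := if a = r then Delta0 r else Delta0 r \ {sroot a}

/-- `A = Ã ∖ {α₀}`. -/
def Aset (r a : ℕ) : Set (ℤ → ℚ) := Atil r a \ {sroot 0}

/-- An admissible triple `(d, v, u)` for `(λ, μ)`: `d ∈ D_{B̃,Ã}`,
`v ∈ D^A_{J, B·d ∩ A}` and `u ∈ D^B_{I, B ∩ J·v·d⁻¹}`. -/
def Admissible (r a b : ℕ) (l1 l2 m1 m2 : List ℕ) (d v u : G) : Prop :=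
  d ∈ DDd r (Atil r b) (Atil r a) ∧
  v ∈ DDm r (Jset l1 l2) ((rAct d '' Aset r b) ∩ Aset r a) (Aset r a) ∧
  u ∈ DDm r (Jset m1 m2) (Aset r b ∩ (rAct d⁻¹ '' (rAct v '' Jset l1 l2))) (Aset r b)

end QQS
namespace QQS

/-! ### Roots with signed indices -/

/-- The vector `e_x` for a signed index `x ≠ 0`, with `e_{-x} = -e_x`. The value at `x = 0` is a
junk value. -/
def E (x : ℤ) : ℤ → ℚ := fun j => if j = x then 1 else if j = -x then -1 else 0

/-- The root `e_y - e_x` for signed indices `x`, `y`. -/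
def R (x y : ℤ) : ℤ → ℚ := E y - E x

lemma evec_eq (i : ℕ) : evec i = E i := rfl

lemma sroot_eq (k : ℕ) (hk : 1 ≤ k) : sroot k = R k (k + 1) := by
  obtain ⟨k, rfl⟩ : ∃ m, k = m + 1 := ⟨k - 1, by omega⟩
  simp only [sroot, evec_eq, R]
  push_cast
  congr 2

lemma E_neg {x : ℤ} (hx : x ≠ 0) : E (-x) = -E x := by
  funext j
  simp only [E, Pi.neg_apply, neg_neg]
  split_ifs <;> first | omega | norm_num

lemma R_neg {x y : ℤ} (hx : x ≠ 0) (hy : y ≠ 0) : R (-y) (-x) = R x y := by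
  simp only [R, E_neg hx, E_neg hy]
  abel

lemma R_apply_right {x y : ℤ} (h : x ≠ y) (h' : x ≠ -y) : R x y y = 1 := by
  simp only [R, E, Pi.sub_apply]
  split_ifs <;> first | omega | norm_num

lemma R_apply_left {x y : ℤ} (h : x ≠ y) (h' : x ≠ -y) : R x y x = -1 := by
  simp only [R, E, Pi.sub_apply]
  split_ifs <;> first | omega | norm_num

lemma R_eq_one {x y j : ℤ} (h' : x ≠ -y) (hj : R x y j = 1) : j = y ∨ j = -x := by
  simp only [R, E, Pi.sub_apply] at hj
  split_ifs at hj <;> first | omega | (norm_num at hj)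

lemma R_eq_neg_one {x y j : ℤ} (h' : x ≠ -y) (hj : R x y j = -1) : j = x ∨ j = -y := by
  simp only [R, E, Pi.sub_apply] at hj
  split_ifs at hj <;> first | omega | (norm_num at hj)

lemma R_inj {x y x' y' : ℤ} (h : x ≠ y) (h' : x ≠ -y) (k' : x' ≠ -y')
    (e : R x y = R x' y') : (x = x' ∧ y = y') ∨ (x = -y' ∧ y = -x') := by
  have h1 := R_eq_one k' ((congrFun e y).symm.trans (R_apply_right h h'))
  have h2 := R_eq_neg_one k' ((congrFun e x).symm.trans (R_apply_left h h'))
  omega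

lemma lt_of_isPos {r : ℕ} {x y : ℤ} (h : x ≠ y) (h' : x ≠ -y)
    (hp : isPos r (R x y)) : x < y := by
  rcases hp with ⟨i, hi, -, e⟩ | ⟨i, j, hi, hij, -, e | e⟩
  · have h1 := (congrFun e y).symm.trans (R_apply_right h h')
    have h2 := (congrFun e x).symm.trans (R_apply_left h h')
    simp only [evec] at h1 h2
    split_ifs at h1 h2 <;> first | omega | (norm_num at h1; done) | (norm_num at h2; done)
  · have e' : R x y = R (-i) j := by
      rw [e, evec_eq, evec_eq, R, E_neg (by omega)]
      abel
    have := R_inj h h' (by omega) e'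
    omega
  · have e' : R x y = R i j := e
    have := R_inj h h' (by omega) e'
    omega

lemma sroot_ne_zero {k : ℕ} (hk : 1 ≤ k) : sroot k ≠ sroot 0 := by
  intro e
  rw [sroot_eq k hk] at e
  have h2 := (congrFun e k).symm.trans (R_apply_left (by omega) (by omega))
  simp only [sroot, evec] at h2
  split_ifs at h2 <;> first | omega | (norm_num at h2)

lemma sroot_inj {k l : ℕ} (hk : 1 ≤ k) (e : sroot k = sroot l) : k = l := by
  rcases Nat.eq_zero_or_pos l with rfl | hl
  · exact absurd e (sroot_ne_zero hk)
  · rw [sroot_eq k hk, sroot_eq l hl] at e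
    have := R_inj (by omega) (by omega) (by omega) e
    omega

/-! ### The sets of simple roots -/

lemma sroot_mem_Aset {r a k : ℕ} (hk : 1 ≤ k) (hkr : k < r) (hka : k ≠ a) :
    sroot k ∈ Aset r a := by
  refine ⟨?_, sroot_ne_zero hk⟩
  unfold Atil
  split_ifs
  · exact ⟨k, hkr, rfl⟩
  · exact ⟨⟨k, hkr, rfl⟩, fun e => hka (sroot_inj hk e)⟩

lemma of_sroot_mem_Aset {r a k : ℕ} (hkr : k < r) (h : sroot k ∈ Aset r a) :
    1 ≤ k ∧ k ≠ a := by
  obtain ⟨h1, h2⟩ := h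
  constructor
  · rcases Nat.eq_zero_or_pos k with rfl | hk
    · exact absurd rfl h2
    · exact hk
  · rintro rfl
    rw [Atil, if_neg (by omega)] at h1
    exact h1.2 rfl

lemma exists_of_mem_Jset {l1 l2 : List ℕ} {x : ℤ → ℚ} (hx : x ∈ Jset l1 l2) :
    ∃ m : ℕ, 1 ≤ m ∧ m < l1.sum + l2.sum ∧ m ≠ l1.sum ∧ x = sroot m := by
  rcases hx with ⟨j, h1, h2, -, rfl⟩ | ⟨j, h1, h2, -, rfl⟩
  · exact ⟨0 + j, by omega, by omega, by omega, rfl⟩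
  · exact ⟨l1.sum + j, by omega, by omega, by omega, rfl⟩

/-! ### The action on roots -/

lemma apply_inv_cancel' (w : G) (x : ℤ) : w (w⁻¹ x) = x := Equiv.apply_symm_apply w x

lemma inW_inv_neg {r : ℕ} {w : G} (hw : inW r w) (x : ℤ) : w⁻¹ (-x) = -(w⁻¹ x) := by
  rw [Equiv.Perm.inv_eq_iff_eq, hw.1, apply_inv_cancel']

lemma rAct_E {r : ℕ} {w : G} (hw : inW r w) (x : ℤ) : rAct w (E x) = E (w⁻¹ x) := by
  funext j
  have h1 : j = w⁻¹ x ↔ w j = x := by rw [eq_comm, Equiv.Perm.inv_eq_iff_eq, eq_comm]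
  have h2 : j = -(w⁻¹ x) ↔ w j = -x := by
    rw [← inW_inv_neg hw, eq_comm, Equiv.Perm.inv_eq_iff_eq, eq_comm]
  simp only [rAct, E, h1, h2]

lemma rAct_R {r : ℕ} {w : G} (hw : inW r w) (x y : ℤ) :
    rAct w (R x y) = R (w⁻¹ x) (w⁻¹ y) := by
  simp only [R, ← rAct_E hw]
  rfl

/-- For `w ∈ D_K` and `α_k ∈ K` with `k ≥ 1`, the map `x ↦ x·w` increases from `k` to `k + 1`. -/
lemma lt_of_mem_DD {r : ℕ} {K : Set (ℤ → ℚ)} {w : G} (hw : w ∈ DD r K) {k : ℕ} (hk : 1 ≤ k)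
    (hK : sroot k ∈ K) : w⁻¹ (k : ℤ) < w⁻¹ ((k : ℤ) + 1) := by
  have hp := hw.2 _ hK
  rw [sroot_eq k hk, rAct_R hw.1] at hp
  refine lt_of_isPos ?_ ?_ hp
  · intro e
    have := w⁻¹.injective e
    omega
  · rw [← inW_inv_neg hw.1]
    intro e
    have := w⁻¹.injective e
    omega

/-- The `a`-block decomposition `[1,a] ⊔ [a+1,∞)` of the positive integers is preserved by `W_A`. -/
lemma Wpar_blocks {r a : ℕ} {w : G} (hw : w ∈ Wpar r (Aset r a)) :
    ∀ x : ℤ, ((1 ≤ w x ∧ w x ≤ (a : ℤ)) ↔ (1 ≤ x ∧ x ≤ (a : ℤ))) ∧ ((a : ℤ) < w x ↔ (a : ℤ) < x) := by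
  refine Subgroup.closure_induction
    (p := fun (w : G) _ => ∀ x : ℤ, ((1 ≤ w x ∧ w x ≤ (a : ℤ)) ↔ (1 ≤ x ∧ x ≤ (a : ℤ))) ∧
      ((a : ℤ) < w x ↔ (a : ℤ) < x)) ?_ ?_ ?_ ?_ hw
  · rintro _ ⟨i, hi, hiA, rfl⟩ x
    obtain ⟨h1, h2⟩ := of_sroot_mem_Aset hi hiA
    rw [s, if_neg (by omega), Equiv.Perm.mul_apply]
    simp only [Equiv.swap_apply_def]
    split_ifs <;> omega
  · intro x
    simp
  · intro f g _ _ hf hg x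
    rw [Equiv.Perm.mul_apply]
    exact ⟨(hf _).1.trans (hg _).1, (hf _).2.trans (hg _).2⟩
  · intro f _ hf x
    have := hf (f⁻¹ x)
    rw [apply_inv_cancel'] at this
    exact ⟨this.1.symm, this.2.symm⟩

lemma inW_inv_le {r : ℕ} {w : G} (hw : inW r w) {x : ℤ} (hx : |x| ≤ r) : w⁻¹ x ≤ r := by
  by_contra! h
  have h1 := hw.2 (w⁻¹ x) (lt_of_lt_of_le h (le_abs_self _))
  rw [apply_inv_cancel'] at h1
  rw [← h1] at h
  exact absurd (le_abs_self x) (by omega)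

/-- For `w ∈ W_A ∩ D_K` and `α_m ∈ K` with `m ≠ 0, a`, the root `α_m·w` is `e_q - e_p` with `p < q`
in one `a`-block. -/
lemma block_pair {r a m : ℕ} {K : Set (ℤ → ℚ)} {w : G} (hw : w ∈ DD r K)
    (hA : w ∈ Wpar r (Aset r a)) (hm : 1 ≤ m) (hmr : m < r) (hma : m ≠ a) (hK : sroot m ∈ K) :
    ∃ p q : ℕ, w⁻¹ (m : ℤ) = p ∧ w⁻¹ ((m : ℤ) + 1) = q ∧ 1 ≤ p ∧ p < q ∧ q ≤ r ∧
      (q ≤ a ∨ a < p) := by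
  have hlt := lt_of_mem_DD hw hm hK
  have h1 := Wpar_blocks (inv_mem hA) m
  have h2 := Wpar_blocks (inv_mem hA) (m + 1)
  have h3 := inW_inv_le hw.1 (x := (m : ℤ) + 1) (by rw [abs_of_nonneg] <;> omega)
  refine ⟨(w⁻¹ (m : ℤ)).toNat, (w⁻¹ ((m : ℤ) + 1)).toNat, ?_⟩
  omega

/-! ### Increasing integer sequences -/

lemma sub_le_of_steps {f : ℤ → ℤ} {i j : ℤ} (h : ∀ k, i ≤ k → k < j → f k < f (k + 1))
    {x y : ℤ} (hx : i ≤ x) (hxy : x ≤ y) (hy : y ≤ j) : y - x ≤ f y - f x := by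
  induction y, hxy using Int.leInduction with
  | base => simp
  | succ n hn ih =>
    have := ih (by omega)
    have := h n (by omega) (by omega)
    omega

/-- An increasing integer sequence on `[i,j]` with total rise at most `j - i` is a translation. -/
lemma step_eq_one {f : ℤ → ℤ} {i j : ℤ} (h : ∀ k, i ≤ k → k < j → f k < f (k + 1))
    (hf : f j - f i ≤ j - i) {x : ℤ} (hx : i ≤ x) (hxj : x ≤ j) : f x = f i + (x - i) := by
  have h1 := sub_le_of_steps h le_rfl hx hxj
  have h2 := sub_le_of_steps h hx hxj le_rfl
  omega

/-- For `w ∈ D_K` with `A ⊆ K`, the map `x ↦ x·w` is increasing on the `a`-blocks. -/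
lemma steps_of_DD {r a p q : ℕ} {K : Set (ℤ → ℚ)} {w : G} (hw : w ∈ DD r K) (hK : Aset r a ⊆ K)
    (hp : 1 ≤ p) (hq : q ≤ r) (hb : q ≤ a ∨ a < p) :
    ∀ k : ℤ, (p : ℤ) ≤ k → k < q → w⁻¹ k < w⁻¹ (k + 1) := by
  intro k h1 h2
  lift k to ℕ using by omega
  exact lt_of_mem_DD hw (by omega) (hK (sroot_mem_Aset (by omega) (by omega) (by omega)))

/-- If `d ∈ D_{B̃,Ã}` sends a positive root `R i j` of `Φ_B` to a positive root `R p q` of `Φ_A`,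
then `j - i = q - p` and the simple constituents `α_p, …, α_{q-1}` of `R p q` all lie in
`B·d`. -/
lemma simple_constituents {r a b i j p q : ℕ} {d : G} (hd : d ∈ DDd r (Atil r b) (Atil r a))
    (hi : 1 ≤ i) (hij : i < j) (hj : j ≤ r) (hb : j ≤ b ∨ b < i)
    (hp : 1 ≤ p) (hpq : p < q) (hq : q ≤ r) (ha : q ≤ a ∨ a < p)
    (e : rAct d (R i j) = R p q) :
    ∀ k : ℕ, p ≤ k → k < q → sroot k ∈ rAct d '' Aset r b := by
  obtain ⟨hd1, hd2⟩ := hd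
  have hD := steps_of_DD hd1 Set.sdiff_subset hi hj hb
  have hD' := steps_of_DD hd2 Set.sdiff_subset hp hq ha
  rw [inv_inv] at hD'
  have hrise := sub_le_of_steps hD' le_rfl (by omega : (p : ℤ) ≤ q) le_rfl
  rw [rAct_R hd1.1] at e
  have hne : d⁻¹ (i : ℤ) ≠ d⁻¹ (j : ℤ) := fun h => by
    have := d⁻¹.injective h
    omega
  have hne' : d⁻¹ (i : ℤ) ≠ -d⁻¹ (j : ℤ) := fun h => by
    rw [← inW_inv_neg hd1.1] at h
    have := d⁻¹.injective h
    omega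
  intro k hk1 hk2
  rcases R_inj hne hne' (by omega) e with ⟨e1, e2⟩ | ⟨e1, e2⟩
  · have e1' : d p = i := by rw [← e1, apply_inv_cancel']
    have e2' : d q = j := by rw [← e2, apply_inv_cancel']
    have htr := fun x => step_eq_one hD (by omega) (x := x)
    -- `α_k` is the image of `α_{i + (k - p)}`
    refine ⟨sroot (i + (k - p)), sroot_mem_Aset (by omega) (by omega) (by omega), ?_⟩
    have h0 : d⁻¹ ((i + (k - p) : ℕ) : ℤ) = k := by
      rw [htr _ (by omega) (by omega)]
      omega
    have h1 : d⁻¹ (((i + (k - p) : ℕ) : ℤ) + 1) = k + 1 := by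
      rw [htr _ (by omega) (by omega)]
      omega
    rw [sroot_eq (i + (k - p)) (by omega), rAct_R hd1.1, h0, h1, sroot_eq k (by omega)]
  · have e1' : d q = -i := by
      have h := hd1.1.1 q
      rw [← e1, apply_inv_cancel'] at h
      omega
    have e2' : d p = -j := by
      have h := hd1.1.1 p
      rw [← e2, apply_inv_cancel'] at h
      omega
    have htr := fun x => step_eq_one hD (by omega) (x := x)
    -- negation reverses the interval, so `α_k` is the image of `α_{i + (q - 1 - k)}`
    refine ⟨sroot (i + (q - 1 - k)), sroot_mem_Aset (by omega) (by omega) (by omega), ?_⟩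
    have h0 : d⁻¹ ((i + (q - 1 - k) : ℕ) : ℤ) = -(k + 1) := by
      rw [htr _ (by omega) (by omega)]
      omega
    have h1 : d⁻¹ (((i + (q - 1 - k) : ℕ) : ℤ) + 1) = -k := by
      rw [htr _ (by omega) (by omega)]
      omega
    rw [sroot_eq (i + (q - 1 - k)) (by omega), rAct_R hd1.1, h0, h1, R_neg (by omega) (by omega),
      sroot_eq k (by omega)]

/-- Let `(d,v,u)` be an admissible triple for `(λ,μ)`, let `S(v) = B·d ∩ A ∩ J·v` and let `c = udv⁻¹`.  Then `I ∩ S(v)·d⁻¹·u⁻¹ = I ∩ J·c⁻¹` (as sets of roots). -/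
theorem I_inter_Sv_eq (n r a b : ℕ) (l1 l2 m1 m2 : List ℕ)
    (hla : l1.sum = a) (hlr : l1.sum + l2.sum = r) (hln : l1.length + l2.length = n)
    (hmb : m1.sum = b) (hmr : m1.sum + m2.sum = r) (hmn : m1.length + m2.length = n)
    (d v u : G) (hadm : Admissible r a b l1 l2 m1 m2 d v u) :
    Jset m1 m2 ∩ (rAct u⁻¹ '' (rAct d⁻¹ '' ((rAct d '' Aset r b) ∩ Aset r a ∩ (rAct v '' Jset l1 l2)))) =
      Jset m1 m2 ∩ (rAct (u * d * v⁻¹)⁻¹ '' Jset l1 l2) := by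
  subst hla hmb
  obtain ⟨hd, ⟨⟨hvJ, hvS⟩, hvA⟩, ⟨⟨huI, -⟩, huB⟩⟩ := hadm
  have hcomp : ∀ x, rAct (u * d * v⁻¹)⁻¹ x = rAct u⁻¹ (rAct d⁻¹ (rAct v x)) := by
    intro x
    funext j
    simp [rAct, mul_assoc]
  apply Set.Subset.antisymm
  · rintro x ⟨hx, _, ⟨_, ⟨_, β, hβ, rfl⟩, rfl⟩, rfl⟩
    exact ⟨hx, β, hβ, hcomp β⟩
  · rintro α ⟨hα, β, hβ, e⟩
    rw [hcomp] at e
    refine ⟨hα, _, ⟨_, ⟨?_, ⟨β, hβ, rfl⟩⟩, rfl⟩, e⟩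
    have eud : rAct d (rAct u α) = rAct v β := by
      rw [← e]
      funext j
      simp [rAct]
    obtain ⟨l, hl1, hl2, hl3, rfl⟩ := exists_of_mem_Jset hα
    obtain ⟨m, hm1, hm2, hm3, rfl⟩ := exists_of_mem_Jset hβ
    rw [hmr] at hl2
    rw [hlr] at hm2
    obtain ⟨i, j, hi, hj, hi1, hij, hjr, hjb⟩ := block_pair huI huB hl1 hl2 hl3 hα
    obtain ⟨p, q, hp, hq, hp1, hpq, hqr, hqa⟩ := block_pair hvJ hvA hm1 hm2 hm3 hβ
    rw [sroot_eq l hl1, sroot_eq m hm1, rAct_R huI.1, rAct_R hvJ.1, hi, hj, hp, hq] at eud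
    have hmem : ∀ k : ℕ, p ≤ k → k < q →
        sroot k ∈ (rAct d '' Aset r m1.sum) ∩ Aset r l1.sum := fun k h1 h2 =>
      ⟨simple_constituents hd hi1 hij hjr hjb hp1 hpq hqr hqa eud k h1 h2,
        sroot_mem_Aset (by omega) (by omega) (by omega)⟩
    have hv : ∀ k : ℤ, (p : ℤ) ≤ k → k < q → v k < v (k + 1) := by
      intro k h1 h2
      lift k to ℕ using by omega
      have := lt_of_mem_DD hvS (by omega) (hmem k (by omega) (by omega))
      rwa [inv_inv] at this
    have hrise := sub_le_of_steps hv le_rfl (by omega : (p : ℤ) ≤ q) le_rfl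
    rw [← hp, ← hq, apply_inv_cancel', apply_inv_cancel', hp, hq] at hrise
    have hq1 : (q : ℤ) = p + 1 := by omega
    have := hmem p le_rfl hpq
    rwa [sroot_eq m hm1, rAct_R hvJ.1, hp, hq, hq1, ← sroot_eq p hp1]

end QQS
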